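/- Let λ ∈ Λ_I⁺. Then in the free ℤ-module on h*: Σ_{β∈Ψ_λ⁺} θ(s_βλ) = Σ_{β∈Ψ_λ⁺⁺} θ(s_βλ) = Σ_{μ∈Λ_I⁺} c(λ,μ) θ(μ), where c(λ,μ) = Σ_{β∈Ψ_λ⁺⁺} sgn(s_βλ,μ) is nonzero for only finitely many μ. Moreover, for each μ ∈ Λ_I⁺, c(λ,μ) = Σ_{β∈Ψ⁺_{λ,μ}} (−1)^{ℓ(w_β)}, where Ψ⁺_{λ,μ} = {β ∈ Ψ_λ⁺ : μ = w_β s_βλ for some w_β ∈ W_I} (for such β the element w_β ∈ W_I is unique). -/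

import Mathlib

open scoped RealInnerProductSpace
open Classical

noncomputable section

namespace JantzenGVM

variable {V : Type*} [NormedAddCommGroup V] [InnerProductSpace ℝ V] [FiniteDimensional ℝ V]

/-- The coroot `α^∨ = 2α/⟨α,α⟩` of a vector `α` (junk value `0` when `α = 0`). -/
def coroot (α : V) : V := (2 / ⟪α, α⟫) • α

/-- The linear functional `v ↦ ⟨v, α^∨⟩`. -/
def corootForm (α : V) : V →ₗ[ℝ] ℝ where
  toFun v := ⟪v, coroot α⟫
  map_add' x y := by simp [inner_add_left]
  map_smul' c x := by simp [inner_smul_left]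

lemma corootForm_self {α : V} (h : ⟪α, α⟫ ≠ 0) : corootForm α α = 2 := by
  simp only [corootForm, coroot, LinearMap.coe_mk, AddHom.coe_mk, real_inner_smul_right]
  field_simp

/-- The reflection `s_α` as a linear automorphism of `V` (the identity when `⟨α,α⟩ = 0`). -/
def reflV (α : V) : V ≃ₗ[ℝ] V :=
  if h : ⟪α, α⟫ = 0 then LinearEquiv.refl ℝ V
  else Module.reflection (corootForm_self h)

/-- `h* = ℂ ⊗ V`, realized as the space of real-linear functionals `V → ℂ` via the
inner product; an element `λ` pairs with a root `α` by `⟨λ, α⟩ = λ α` and with the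
coroot by `⟨λ, α^∨⟩ = λ (coroot α)`. -/
abbrev HStar (V : Type*) [NormedAddCommGroup V] [InnerProductSpace ℝ V] := V →ₗ[ℝ] ℂ

/-- The canonical embedding of `V` into `h*`. -/
def emb (α : V) : HStar V where
  toFun v := (⟪α, v⟫ : ℂ)
  map_add' x y := by simp [inner_add_right]
  map_smul' c x := by simp [inner_smul_right, Complex.real_smul]

/-- The action of a linear automorphism `w` of `V` on `h*`: `(w • λ)(v) = λ(w⁻¹ v)`. -/
def wAct (w : V ≃ₗ[ℝ] V) (l : HStar V) : HStar V := l ∘ₗ (w.symm : V →ₗ[ℝ] V)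

/-- The reflection `s_β λ = λ - ⟨λ, β^∨⟩ β` acting on `h*`. -/
def sRefl (β : V) (l : HStar V) : HStar V := l - l (coroot β) • emb β

/-- The group generated by the reflections in the elements of `Φ'`. -/
def weyl (Φ' : Set V) : Subgroup (V ≃ₗ[ℝ] V) :=
  Subgroup.closure {w | ∃ α ∈ Φ', w = reflV α}

/-- A finite, reduced, crystallographic root system spanning the Euclidean space `V`,
together with a choice of positive system and the corresponding simple system. -/
structure RootSys (V : Type*) [NormedAddCommGroup V] [InnerProductSpace ℝ V]
    [FiniteDimensional ℝ V] where
  Φ : Finset V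
  pos : Finset V
  Δ : Finset V
  ne_zero : ∀ α ∈ Φ, α ≠ (0 : V)
  span_eq_top : Submodule.span ℝ (Φ : Set V) = ⊤
  reduced : ∀ α ∈ Φ, ∀ c : ℝ, c • α ∈ Φ → c = 1 ∨ c = -1
  refl_mem : ∀ α ∈ Φ, ∀ β ∈ Φ, reflV α β ∈ Φ
  crystallographic : ∀ α ∈ Φ, ∀ β ∈ Φ, ∃ n : ℤ, ⟪β, coroot α⟫ = (n : ℝ)
  pos_subset : pos ⊆ Φ
  mem_pos_or : ∀ α ∈ Φ, α ∈ pos ∨ -α ∈ pos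
  not_both : ∀ α ∈ pos, -α ∉ pos
  simple_subset : Δ ⊆ pos
  simple_indep : LinearIndependent ℝ (fun x : {a : V // a ∈ Δ} => x.1)
  simple_gen : ∀ β ∈ pos, ∃ c : V → ℝ, (∀ α ∈ Δ, 0 ≤ c α) ∧ β = ∑ α ∈ Δ, c α • α

/-- A subsystem of the root system: a subset of `Φ` closed under its own reflections. -/
def IsSubsystem (S : RootSys V) (Φ' : Set V) : Prop :=
  Φ' ⊆ (S.Φ : Set V) ∧ ∀ α ∈ Φ', ∀ β ∈ Φ', reflV α β ∈ Φ'

/-- The length of `w`, i.e. the number of positive roots sent to negative roots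
(this equals the Coxeter length for elements of the Weyl group). -/
def len (S : RootSys V) (w : V ≃ₗ[ℝ] V) : ℕ :=
  {β ∈ (S.pos : Set V) | w β ∉ (S.pos : Set V)}.ncard

/-- `Φ_I = ℤI ∩ Φ`, the subsystem generated by a subset `I` of the simple roots. -/
def PhiI (S : RootSys V) (I : Finset V) : Set V :=
  {α ∈ (S.Φ : Set V) | α ∈ Submodule.span ℤ (I : Set V)}

/-- `z` is a positive integer. -/
def IsPosInt (z : ℂ) : Prop := ∃ n : ℤ, 0 < n ∧ z = (n : ℂ)

/-- `z` is an integer. -/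
def IsInt (z : ℂ) : Prop := ∃ n : ℤ, z = (n : ℂ)

/-- `Λ_I⁺ = {λ ∈ h* : ⟨λ, α^∨⟩ ∈ ℤ_{>0} for all α ∈ I}`. -/
def LambdaP (I : Set V) : Set (HStar V) :=
  {l | ∀ α ∈ I, IsPosInt (l (coroot α))}

/-- `Λ⁺(Φ'', Φ') = {ν ∈ ℂΦ' : ⟨ν, α^∨⟩ ∈ ℤ_{>0} for all α ∈ Φ'' ∩ Φ⁺}`. -/
def LambdaPSub (S : RootSys V) (Φ'' Φ' : Set V) : Set (HStar V) :=
  {l | l ∈ Submodule.span ℂ (emb '' Φ') ∧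
       ∀ α ∈ Φ'' ∩ (S.pos : Set V), IsPosInt (l (coroot α))}

/-- `λ` is `Φ''`-regular: `⟨λ, α⟩ ≠ 0` for all `α ∈ Φ''`. -/
def IsRegularOn (Φ'' : Set V) (l : HStar V) : Prop := ∀ α ∈ Φ'', l α ≠ 0

/-- `Ψ⁺(λ, Φ'', Φ') = {β ∈ (Φ' ∩ Φ⁺) \ Φ'' : ⟨λ, β^∨⟩ ∈ ℤ_{>0}}`. -/
def PsiP (S : RootSys V) (Φ'' Φ' : Set V) (l : HStar V) : Set V :=
  {β | β ∈ Φ' ∩ (S.pos : Set V) ∧ β ∉ Φ'' ∧ IsPosInt (l (coroot β))}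

/-- `Ψ⁺⁺(λ, Φ'', Φ') = {β ∈ Ψ⁺(λ, Φ'', Φ') : s_β λ is Φ''-regular}`. -/
def PsiPP (S : RootSys V) (Φ'' Φ' : Set V) (l : HStar V) : Set V :=
  {β ∈ PsiP S Φ'' Φ' l | ∀ α ∈ Φ'', (sRefl β l) α ≠ 0}

/-- The sign function: `sgn(λ, μ) = (-1)^{ℓ(w)}` if `λ, μ` are `Φ''`-regular and
`μ = wλ` for some `w ∈ W(Φ'')`, and `0` otherwise. -/
def sgnW (S : RootSys V) (Φ'' : Set V) (l m : HStar V) : ℤ :=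
  if h : IsRegularOn Φ'' l ∧ IsRegularOn Φ'' m ∧ ∃ w, w ∈ weyl Φ'' ∧ m = wAct w l
  then (-1) ^ len S h.2.2.choose else 0

/-- The Jantzen coefficient `c(λ, μ, Φ'', Φ') = Σ_{β ∈ Ψ⁺⁺(λ,Φ'',Φ')} sgn(s_β λ, μ)`. -/
def jc (S : RootSys V) (Φ'' Φ' : Set V) (l m : HStar V) : ℤ :=
  ∑ᶠ β ∈ PsiPP S Φ'' Φ' l, sgnW S Φ'' (sRefl β l) m

/-- The symmetrized Jantzen coefficient `c̃(λ, μ, Φ'', Φ')`. -/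
def jcSym (S : RootSys V) (Φ'' Φ' : Set V) (l m : HStar V) : ℤ :=
  jc S Φ'' Φ' l m + jc S Φ'' Φ' m l

/-- `θ(λ) = Σ_{w ∈ W_I} (-1)^{ℓ(w)} e^{wλ}` in the free `ℤ`-module on `h*`. -/
def theta (S : RootSys V) (I : Finset V) (l : HStar V) : HStar V →₀ ℤ :=
  ∑ᶠ w ∈ (weyl (PhiI S I) : Set (V ≃ₗ[ℝ] V)),
    Finsupp.single (wAct w l) ((-1) ^ len S w)

/-- `Φ_λ = {α ∈ Φ : ⟨λ, α⟩ = 0}`. -/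
def singSet (S : RootSys V) (l : HStar V) : Set V :=
  {α ∈ (S.Φ : Set V) | l α = 0}

/-- `Φ_{[λ]} = {α ∈ Φ : ⟨λ, α^∨⟩ ∈ ℤ}`. -/
def integralSet (S : RootSys V) (l : HStar V) : Set V :=
  {α ∈ (S.Φ : Set V) | IsInt (l (coroot α))}

/-- `(ℚ A) ∩ Φ`, the intersection of the rational span of `A` with `Φ`.
Taking `A = Φ_I ∪ {β}` gives `Φ_{β,1}`; taking `A = Φ_λ ∪ {β}` gives `Φ_{β,2}`. -/
def ratSpanRoots (S : RootSys V) (A : Set V) : Set V :=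
  {γ ∈ (S.Φ : Set V) | ∃ (t : Finset V) (c : V → ℚ),
    (t : Set V) ⊆ A ∧ γ = ∑ α ∈ t, (c α : ℝ) • α}

/-- `Φ_{β,0}`, the irreducible component of `Φ` containing `β`. -/
def component (S : RootSys V) (β : V) : Set V :=
  {γ ∈ (S.Φ : Set V) |
    Relation.ReflTransGen
      (fun x y => x ∈ (S.Φ : Set V) ∧ y ∈ (S.Φ : Set V) ∧ ⟪x, y⟫ ≠ 0) β γ}

/-- `λ|_{Φ'}`: the unique element of `ℂΦ'` with `⟨λ|_{Φ'}, α^∨⟩ = ⟨λ, α^∨⟩`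
for all `α ∈ Φ'`. -/
def restrictW (Φ' : Set V) (l : HStar V) : HStar V :=
  letI : Nonempty (HStar V) := ⟨0⟩
  Classical.epsilon fun m =>
    m ∈ Submodule.span ℂ (emb '' Φ') ∧ ∀ α ∈ Φ', m (coroot α) = l (coroot α)

/-- `ᴵWᴶ = {w ∈ W : ℓ(uwv) = ℓ(u) + ℓ(w) + ℓ(v) for all u ∈ W_I, v ∈ W_J}`. -/
def doubleCoset (S : RootSys V) (I J : Finset V) : Set (V ≃ₗ[ℝ] V) :=
  {w | w ∈ weyl (S.Φ : Set V) ∧ ∀ u ∈ weyl (PhiI S I), ∀ v ∈ weyl (PhiI S J),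
    len S (u * w * v) = len S u + len S w + len S v}

/-- The fundamental weight `ϖ_j` relative to an enumeration `e` of the simple roots:
the unique element of `h*` with `⟨ϖ_j, α_k^∨⟩ = δ_{jk}`. -/
def fundWeight {n : ℕ} (e : Fin n → V) (j : Fin n) : HStar V :=
  letI : Nonempty (HStar V) := ⟨0⟩
  Classical.epsilon fun m => ∀ k : Fin n, m (coroot (e k)) = if k = j then 1 else 0

/-- The labels of the irreducible Dynkin types. -/
inductive LieType | A | B | C | D | E | F | G
deriving DecidableEq

/-- The Cartan matrix of type `A_n` (1-based indices): entry `(i,j)` is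
`⟨α_i, α_j^∨⟩`. -/
def cartanA (i j : ℕ) : ℤ :=
  if i = j then 2 else if i + 1 = j ∨ j + 1 = i then -1 else 0

/-- The Cartan matrices of the irreducible types in the standard (Bourbaki/Humphreys)
numbering of the Dynkin diagram: `cartanEntry t n i j = ⟨α_i, α_j^∨⟩` (1-based). -/
def cartanEntry : LieType → ℕ → ℕ → ℕ → ℤ
  | .A, _, i, j => cartanA i j
  | .B, n, i, j => if i + 1 = n ∧ j = n then -2 else cartanA i j
  | .C, n, i, j => if i = n ∧ j + 1 = n then -2 else cartanA i j
  | .D, n, i, j =>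
      if i = j then 2
      else if (i + 2 = n ∧ j = n) ∨ (i = n ∧ j + 2 = n) then -1
      else if (i + 1 = n ∧ j = n) ∨ (i = n ∧ j + 1 = n) then 0
      else cartanA i j
  | .E, _, i, j =>
      if i = j then 2
      else if (i = 1 ∧ j = 3) ∨ (i = 3 ∧ j = 1) ∨ (i = 2 ∧ j = 4) ∨ (i = 4 ∧ j = 2) then -1
      else if (i = 1 ∧ j = 2) ∨ (i = 2 ∧ j = 1) ∨ (i = 2 ∧ j = 3) ∨ (i = 3 ∧ j = 2) then 0
      else cartanA i j
  | .F, _, i, j => if i = 2 ∧ j = 3 then -2 else cartanA i j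
  | .G, _, i, j => if i = 2 ∧ j = 1 then -3 else cartanA i j

/-- The standard basis vector `e_k` (1-based index, junk `0` outside `1 ≤ k ≤ n`). -/
def stdE (n k : ℕ) : EuclideanSpace ℝ (Fin n) :=
  if h : 1 ≤ k ∧ k ≤ n then EuclideanSpace.single ⟨k - 1, by omega⟩ 1 else 0

/-- The labels `B`, `C`, `D` of the classical non-`A` types. -/
inductive BCD | B | C | D
deriving DecidableEq

/-- The root set of `B_n` / `C_n` / `D_n` in the standard realization. -/
def bcdRoots (t : BCD) (n : ℕ) : Set (EuclideanSpace ℝ (Fin n)) :=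
  {v | (∃ i j : ℕ, 1 ≤ i ∧ i < j ∧ j ≤ n ∧
          (v = stdE n i - stdE n j ∨ v = -(stdE n i - stdE n j) ∨
           v = stdE n i + stdE n j ∨ v = -(stdE n i + stdE n j))) ∨
       (match t with
        | .B => ∃ i : ℕ, 1 ≤ i ∧ i ≤ n ∧ (v = stdE n i ∨ v = -stdE n i)
        | .C => ∃ i : ℕ, 1 ≤ i ∧ i ≤ n ∧ (v = (2:ℝ) • stdE n i ∨ v = -((2:ℝ) • stdE n i))
        | .D => False)}

/-- The positive roots of `B_n` / `C_n` / `D_n` in the standard realization. -/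
def bcdPos (t : BCD) (n : ℕ) : Set (EuclideanSpace ℝ (Fin n)) :=
  {v | (∃ i j : ℕ, 1 ≤ i ∧ i < j ∧ j ≤ n ∧
          (v = stdE n i - stdE n j ∨ v = stdE n i + stdE n j)) ∨
       (match t with
        | .B => ∃ i : ℕ, 1 ≤ i ∧ i ≤ n ∧ v = stdE n i
        | .C => ∃ i : ℕ, 1 ≤ i ∧ i ≤ n ∧ v = (2:ℝ) • stdE n i
        | .D => False)}

/-- The simple roots of `B_n` / `C_n` / `D_n` in the standard realization. -/
def bcdSimple (t : BCD) (n : ℕ) : Set (EuclideanSpace ℝ (Fin n)) :=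
  {v | (∃ i : ℕ, 1 ≤ i ∧ i < n ∧ v = stdE n i - stdE n (i + 1)) ∨
       (match t with
        | .B => v = stdE n n
        | .C => v = (2:ℝ) • stdE n n
        | .D => v = stdE n (n - 1) + stdE n n)}

/-- The simple root `α_k` of `B_n` / `C_n` / `D_n` (1-based index `k`). -/
def bcdAlpha (t : BCD) (n k : ℕ) : EuclideanSpace ℝ (Fin n) :=
  if k < n then stdE n k - stdE n (k + 1)
  else match t with
  | .B => stdE n n
  | .C => (2:ℝ) • stdE n n
  | .D => stdE n (n - 1) + stdE n n


lemma reflV_apply (α v : V) : reflV α v = v - ⟪v, coroot α⟫ • α := by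
  unfold reflV
  split_ifs with h
  · have : α = 0 := inner_self_eq_zero.mp h
    simp [this]
  · simp [Module.reflection_apply, corootForm]

lemma coroot_neg (α : V) : coroot (-α) = -coroot α := by simp [coroot]

lemma inner_self_coroot {α : V} (h : α ≠ 0) : ⟪α, coroot α⟫ = 2 := by
  have h' : ⟪α, α⟫ ≠ 0 := fun h0 => h (inner_self_eq_zero.mp h0)
  simp only [coroot, real_inner_smul_right]
  field_simp

lemma reflV_self (α : V) : reflV α α = -α := by
  rw [reflV_apply]
  by_cases h : α = 0
  · simp [h]
  · rw [inner_self_coroot h]; module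

lemma reflV_invol (α v : V) : reflV α (reflV α v) = v := by
  rw [reflV_apply α v, map_sub, map_smul, reflV_self, reflV_apply]; module

lemma reflV_mul_self (α : V) : reflV α * reflV α = 1 := by
  ext v; exact reflV_invol α v

lemma reflV_inv (α : V) : (reflV α)⁻¹ = reflV α :=
  inv_eq_of_mul_eq_one_left (reflV_mul_self α)

lemma reflV_symm (α : V) : (reflV α).symm = reflV α := reflV_inv α

lemma reflV_neg (α : V) : reflV (-α) = reflV α := by
  ext v; simp [reflV_apply, coroot_neg]

lemma wAct_mul (u w : V ≃ₗ[ℝ] V) (l : HStar V) : wAct (u * w) l = wAct u (wAct w l) := rfl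

lemma wAct_one (l : HStar V) : wAct 1 l = l := rfl

lemma wAct_apply (w : V ≃ₗ[ℝ] V) (l : HStar V) (v : V) : wAct w l v = l (w⁻¹ v) := rfl

lemma wAct_inv_apply (w : V ≃ₗ[ℝ] V) (l : HStar V) (v : V) : wAct w l (w v) = l v := by
  simp [wAct]

lemma wAct_refl_apply (α : V) (l : HStar V) (v : V) :
    wAct (reflV α) l v = l v - (⟪v, coroot α⟫ : ℝ) • l α := by
  simp only [wAct, reflV_symm, LinearMap.comp_apply]
  change l (reflV α v) = _
  rw [reflV_apply]; simp

lemma sRefl_apply (β : V) (l : HStar V) (v : V) :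
    sRefl β l v = l v - l (coroot β) * ((⟪β, v⟫ : ℝ) : ℂ) := rfl

lemma inner_reflV (α x y : V) : ⟪reflV α x, reflV α y⟫ = ⟪x, y⟫ := by
  by_cases h : α = 0
  · simp [reflV_apply, h]
  have h' : ⟪α, α⟫ ≠ 0 := fun h0 => h (inner_self_eq_zero.mp h0)
  simp only [reflV_apply, coroot, inner_sub_left, inner_sub_right, real_inner_smul_left,
    real_inner_smul_right, real_inner_comm α]
  field_simp
  ring

structure Good (S : RootSys V) (w : V ≃ₗ[ℝ] V) : Prop where
  mem : ∀ β ∈ S.Φ, w β ∈ S.Φ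
  inner : ∀ x y, ⟪w x, w y⟫ = ⟪x, y⟫

lemma Good.refl {S : RootSys V} {α : V} (h : α ∈ S.Φ) : Good S (reflV α) :=
  ⟨fun β hβ => S.refl_mem α h β hβ, inner_reflV α⟩

lemma Good.mul {S : RootSys V} {u w : V ≃ₗ[ℝ] V} (hu : Good S u) (hw : Good S w) :
    Good S (u * w) :=
  ⟨fun β hβ => hu.mem _ (hw.mem _ hβ), fun x y => (hu.inner _ _).trans (hw.inner _ _)⟩

lemma Good.coroot {S : RootSys V} {w : V ≃ₗ[ℝ] V} (hw : Good S w) (α : V) :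
    coroot (w α) = w (coroot α) := by
  simp only [JantzenGVM.coroot, hw.inner, map_smul]

lemma Good.inv {S : RootSys V} {w : V ≃ₗ[ℝ] V} (hw : Good S w) : Good S w⁻¹ := by
  refine ⟨fun β hβ => ?_, fun x y => ?_⟩
  · have hinj : Set.InjOn w (S.Φ : Set V) := w.injective.injOn
    have := Finset.surjOn_of_injOn_of_card_le w hw.mem hinj le_rfl
    obtain ⟨γ, hγ, rfl⟩ := this hβ
    simpa using hγ
  · have := hw.inner (w⁻¹ x) (w⁻¹ y)
    have h1 : ∀ x, w (w⁻¹ x) = x := fun x => w.apply_symm_apply x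
    rw [h1, h1] at this
    exact this.symm

lemma Good.conj {S : RootSys V} {w : V ≃ₗ[ℝ] V} (hw : Good S w) (α : V) :
    reflV (w α) * w = w * reflV α := by
  ext v
  simp only [LinearEquiv.mul_apply, reflV_apply, hw.coroot, hw.inner, map_sub, map_smul]

lemma RootSys.neg_mem (S : RootSys V) {α : V} (h : α ∈ S.Φ) : -α ∈ S.Φ := by
  have := S.refl_mem α h α h
  rwa [reflV_self] at this

lemma RootSys.neg_pos (S : RootSys V) {α : V} (h : α ∈ S.Φ) (hn : α ∉ S.pos) : -α ∈ S.pos :=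
  (S.mem_pos_or α h).resolve_left hn

def eps (S : RootSys V) (v : V) : ℤ := if v ∈ S.pos then 1 else -1

lemma eps_neg (S : RootSys V) {v : V} (h : v ∈ S.Φ) : eps S (-v) = - eps S v := by
  unfold eps
  by_cases hv : v ∈ S.pos
  · simp [hv, S.not_both v hv]
  · simp [hv, S.neg_pos h hv]

lemma sg_eq (S : RootSys V) (w : V ≃ₗ[ℝ] V) :
    (-1 : ℤ) ^ len S w = ∏ β ∈ S.pos, eps S (w β) := by
  have : len S w = (S.pos.filter (fun β => w β ∉ S.pos)).card := by
    rw [len, ← Set.ncard_coe_finset]; congr 1; ext; simp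
  rw [this]
  unfold eps
  rw [Finset.prod_ite]; simp

lemma prod_even (S : RootSys V) {w : V ≃ₗ[ℝ] V} (hw : Good S w) (f : V → ℤ)
    (hf : ∀ γ ∈ S.Φ, f (-γ) = f γ) : ∏ β ∈ S.pos, f (w β) = ∏ β ∈ S.pos, f β := by
  have h1 : ∀ x, w (w⁻¹ x) = x := fun x => w.apply_symm_apply x
  have h2 : ∀ x, w⁻¹ (w x) = x := fun x => w.symm_apply_apply x
  refine Finset.prod_nbij' (fun β => if w β ∈ S.pos then w β else - w β)
    (fun β => if w⁻¹ β ∈ S.pos then w⁻¹ β else - w⁻¹ β) ?_ ?_ ?_ ?_ ?_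
  · intro β hβ
    try dsimp only
    split_ifs with h
    · exact h
    · exact S.neg_pos (hw.mem _ (S.pos_subset hβ)) h
  · intro β hβ
    try dsimp only
    split_ifs with h
    · exact h
    · exact S.neg_pos (hw.inv.mem _ (S.pos_subset hβ)) h
  · intro β hβ
    by_cases h : w β ∈ S.pos
    · simp [h, h2, hβ]
    · simp [h, h2, S.not_both β hβ]
  · intro β hβ
    by_cases h : w⁻¹ β ∈ S.pos
    · simp only [if_pos h, h1, if_pos hβ]
    · simp only [if_neg h, map_neg, h1, if_neg (S.not_both β hβ), neg_neg]
  · intro β hβ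
    try dsimp only
    split_ifs with h
    · rfl
    · exact (hf _ (hw.mem _ (S.pos_subset hβ))).symm

lemma eps_sq (S : RootSys V) (v : V) : eps S v * eps S v = 1 := by
  unfold eps; split_ifs <;> norm_num

lemma sg_mul (S : RootSys V) {u w : V ≃ₗ[ℝ] V} (hu : Good S u) (hw : Good S w) :
    (-1 : ℤ) ^ len S (u * w) = (-1) ^ len S u * (-1) ^ len S w := by
  rw [sg_eq S (u * w), sg_eq S w]
  have h : ∏ β ∈ S.pos, eps S (u β) * eps S β = (-1 : ℤ) ^ len S u := by
    rw [sg_eq]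
    refine Finset.prod_congr rfl fun β hβ => ?_
    simp [eps, hβ]
  rw [← h, ← prod_even S hw (fun β => eps S (u β) * eps S β), ← Finset.prod_mul_distrib]
  · refine Finset.prod_congr rfl fun β hβ => ?_
    rw [mul_assoc, eps_sq, mul_one]; rfl
  · intro γ hγ
    simp only [map_neg]
    rw [eps_neg S hγ, eps_neg S (hu.mem _ hγ)]; ring

lemma sg_refl_pos (S : RootSys V) {α : V} (hα : α ∈ S.pos) : (-1 : ℤ) ^ len S (reflV α) = -1 := by
  rw [sg_eq, ← Finset.mul_prod_erase _ _ hα]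
  have h0 : eps S (reflV α α) = -1 := by
    rw [reflV_self]; simp [eps, S.not_both α hα]
  have hαΦ := S.pos_subset hα
  rw [h0]
  suffices h : ∏ x ∈ S.pos.erase α, eps S (reflV α x) = 1 by rw [h]; norm_num
  have hneg : ∀ x ∈ S.pos, reflV α x ∉ S.pos → - reflV α x ∈ S.pos := fun x hx h =>
    S.neg_pos (S.refl_mem α hαΦ x (S.pos_subset hx)) h
  refine Finset.prod_involution (fun x _ => if reflV α x ∈ S.pos then x else - reflV α x)
    ?_ ?_ ?_ ?_
  · intro x hx
    have hx' := (Finset.mem_erase.mp hx).2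
    by_cases h : reflV α x ∈ S.pos
    · simp [h, eps]
    · simp [h, eps, reflV_invol, S.not_both x hx']
  · intro x hx hne
    have hx' := (Finset.mem_erase.mp hx).2
    have h : reflV α x ∉ S.pos := by
      intro h; simp [eps, h] at hne
    rw [if_neg h]
    intro heq
    rw [reflV_apply] at heq
    have h2 : x = (⟪x, coroot α⟫ / 2) • α := by
      have : (2 : ℝ) • x = ⟪x, coroot α⟫ • α := by
        have h5 : x + (x - ⟪x, coroot α⟫ • α) = 0 := by
          rw [add_comm]; exact neg_eq_iff_add_eq_zero.mp heq
        rw [two_smul, ← sub_eq_zero, ← h5]; abel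
      rw [div_eq_inv_mul, mul_smul, ← this, smul_smul]; norm_num
    have h3 := S.reduced α hαΦ (⟪x, coroot α⟫ / 2) (h2 ▸ S.pos_subset hx')
    rcases h3 with h3 | h3
    · rw [h3, one_smul] at h2
      exact (Finset.mem_erase.mp hx).1 h2
    · rw [h3, neg_one_smul] at h2
      exact S.not_both α hα (h2 ▸ hx')
  · intro x hx
    have hx' := (Finset.mem_erase.mp hx)
    try dsimp only
    split_ifs with h
    · exact hx
    · refine Finset.mem_erase.mpr ⟨fun h1 => hx'.1 ?_, hneg x hx'.2 h⟩
      have : reflV α x = -α := neg_eq_iff_eq_neg.mp h1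
      rw [← reflV_invol α x, this, map_neg, reflV_self, neg_neg]
  · intro x hx
    have hx' := (Finset.mem_erase.mp hx)
    by_cases h : reflV α x ∈ S.pos
    · simp [h]
    · simp [h, reflV_invol, S.not_both x hx'.2]

lemma sg_refl (S : RootSys V) {α : V} (hα : α ∈ S.Φ) : (-1 : ℤ) ^ len S (reflV α) = -1 := by
  by_cases h : α ∈ S.pos
  · exact sg_refl_pos S h
  · rw [← reflV_neg]; exact sg_refl_pos S (S.neg_pos hα h)

lemma weyl_good (S : RootSys V) {I : Finset V} {w : V ≃ₗ[ℝ] V} (hw : w ∈ weyl (PhiI S I)) :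
    Good S w := by
  induction hw using Subgroup.closure_induction with
  | mem x hx => obtain ⟨α, hα, rfl⟩ := hx; exact Good.refl hα.1
  | one => exact ⟨fun _ h => h, fun _ _ => rfl⟩
  | mul x y _ _ hx hy => exact hx.mul hy
  | inv x _ hx => exact hx.inv

lemma PhiI_refl (S : RootSys V) {I : Finset V} {α β : V} (hα : α ∈ PhiI S I) (hβ : β ∈ PhiI S I) :
    reflV α β ∈ PhiI S I := by
  refine ⟨S.refl_mem α hα.1 β hβ.1, ?_⟩
  obtain ⟨n, hn⟩ := S.crystallographic α hα.1 β hβ.1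
  rw [reflV_apply, hn, Int.cast_smul_eq_zsmul]
  exact sub_mem hβ.2 (Submodule.smul_mem _ _ hα.2)

lemma PhiI_neg (S : RootSys V) {I : Finset V} {α : V} (hα : α ∈ PhiI S I) : -α ∈ PhiI S I :=
  ⟨S.neg_mem hα.1, neg_mem hα.2⟩

lemma weyl_PhiI (S : RootSys V) {I : Finset V} {w : V ≃ₗ[ℝ] V} (hw : w ∈ weyl (PhiI S I)) :
    ∀ β ∈ PhiI S I, w β ∈ PhiI S I := by
  induction hw using Subgroup.closure_induction_left with
  | one => exact fun _ h => h
  | mul_left x hx y _ ih =>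
    obtain ⟨α, hα, rfl⟩ := hx
    exact fun β hβ => PhiI_refl S hα (ih β hβ)
  | inv_mul_cancel x hx y _ ih =>
    obtain ⟨α, hα, rfl⟩ := hx
    rw [reflV_inv]
    exact fun β hβ => PhiI_refl S hα (ih β hβ)

lemma mem_PhiI (S : RootSys V) {I : Finset V} (hI : I ⊆ S.Δ) {α : V} (h : α ∈ I) :
    α ∈ PhiI S I :=
  ⟨S.pos_subset (S.simple_subset (hI h)), Submodule.subset_span h⟩

lemma refl_mem_weyl (S : RootSys V) {I : Finset V} {α : V} (h : α ∈ PhiI S I) :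
    reflV α ∈ weyl (PhiI S I) := Subgroup.subset_closure ⟨α, h, rfl⟩

lemma weyl_finite (S : RootSys V) (I : Finset V) :
    (weyl (PhiI S I) : Set (V ≃ₗ[ℝ] V)).Finite := by
  have hfin : (Set.pi Set.univ (fun _ : S.Φ => (S.Φ : Set V))).Finite :=
    Set.Finite.pi' (fun _ => S.Φ.finite_toSet) |>.subset (fun f hf i => hf i trivial)
  refine Set.Finite.of_injOn (f := fun (w : V ≃ₗ[ℝ] V) (x : S.Φ) => w x.1) ?_ ?_ hfin
  · intro w hw x _
    exact (weyl_good S hw).mem _ x.2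
  · intro w _ w' _ h
    apply LinearEquiv.toLinearMap_injective
    refine LinearMap.ext_on (s := (S.Φ : Set V)) S.span_eq_top fun x hx => ?_
    exact congrFun h ⟨x, hx⟩

lemma theta_act (S : RootSys V) (I : Finset V) {w : V ≃ₗ[ℝ] V} (hw : w ∈ weyl (PhiI S I))
    (l : HStar V) : theta S I (wAct w l) = ((-1 : ℤ) ^ len S w) • theta S I l := by
  unfold theta
  rw [finsum_mem_eq_finite_toFinset_sum _ (weyl_finite S I),
    finsum_mem_eq_finite_toFinset_sum _ (weyl_finite S I), Finset.smul_sum]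
  refine Finset.sum_nbij' (fun u => u * w) (fun u => u * w⁻¹) ?_ ?_ ?_ ?_ ?_
  · intro u hu
    simp only [Set.Finite.mem_toFinset] at hu ⊢
    exact mul_mem hu hw
  · intro u hu
    simp only [Set.Finite.mem_toFinset] at hu ⊢
    exact mul_mem hu (inv_mem hw)
  · intro u _; simp
  · intro u _; simp
  · intro u hu
    simp only [Set.Finite.mem_toFinset] at hu
    rw [sg_mul S (weyl_good S hu) (weyl_good S hw), wAct_mul, Finsupp.smul_single]
    congr 1
    rw [smul_eq_mul, mul_comm, mul_assoc, ← pow_add, Even.neg_one_pow ⟨_, rfl⟩, mul_one]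

lemma theta_sing (S : RootSys V) (I : Finset V) {α : V} (hα : α ∈ PhiI S I)
    (l : HStar V) (h : l α = 0) : theta S I l = 0 := by
  have h1 : wAct (reflV α) l = l := by
    ext v; rw [wAct_refl_apply, h]; simp
  have h2 := theta_act S I (refl_mem_weyl S hα) l
  rw [h1, sg_refl S hα.1, neg_one_smul] at h2
  exact self_eq_neg.mp h2

lemma exists_xi (S : RootSys V) : ∃ ξ : V, ∀ α ∈ S.Δ, ⟪ξ, α⟫ = 1 := by
  obtain ⟨g, hg⟩ := LinearMap.exists_extend
    ((Module.Basis.span S.simple_indep).constr ℝ (fun _ => (1 : ℝ)))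
  refine ⟨(InnerProductSpace.toDual ℝ V).symm g.toContinuousLinearMap, fun α hα => ?_⟩
  rw [InnerProductSpace.toDual_symm_apply]
  have h1 : ((Module.Basis.span S.simple_indep ⟨α, hα⟩ : _) : V) = α :=
    congrArg Subtype.val (Module.Basis.span_apply S.simple_indep ⟨α, hα⟩)
  have h2 := LinearMap.congr_fun hg (Module.Basis.span S.simple_indep ⟨α, hα⟩)
  rw [Module.Basis.constr_basis] at h2
  simpa [h1] using h2

lemma coef_zero (S : RootSys V) (c : V → ℝ) (h : ∑ α ∈ S.Δ, c α • α = 0) :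
    ∀ α ∈ S.Δ, c α = 0 := by
  intro α hα
  refine Fintype.linearIndependent_iff.mp S.simple_indep (fun x => c x.1) ?_ ⟨α, hα⟩
  rw [← h, ← Finset.sum_coe_sort S.Δ]

lemma coefI (S : RootSys V) {I : Finset V} (hI : I ⊆ S.Δ) {γ : V} (h : γ ∈ PhiI S I)
    (hp : γ ∈ S.pos) : ∃ c : V → ℝ, (∀ α ∈ I, 0 ≤ c α) ∧ γ = ∑ α ∈ I, c α • α := by
  obtain ⟨c, hc, hs⟩ := S.simple_gen γ hp
  obtain ⟨n, -, hn⟩ := Submodule.mem_span_finset.mp h.2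
  refine ⟨c, fun α hα => hc α (hI hα), ?_⟩
  have key := coef_zero S (fun α => c α - if α ∈ I then (n α : ℝ) else 0) (by
    simp only [sub_smul, Finset.sum_sub_distrib, ite_smul, zero_smul]
    rw [← hs, Finset.sum_ite_mem, Finset.inter_eq_right.mpr hI]
    simp only [Int.cast_smul_eq_zsmul]
    rw [hn, sub_self])
  rw [hs]
  symm
  refine Finset.sum_subset hI fun α hα hαI => ?_
  have := key α hα
  simp only [hαI, if_false, sub_zero] at this
  rw [this, zero_smul]

lemma simple_perm (S : RootSys V) {α γ : V} (hα : α ∈ S.Δ) (hγ : γ ∈ S.pos) (hne : γ ≠ α) :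
    reflV α γ ∈ S.pos := by
  by_contra hn
  have hαΦ := S.pos_subset (S.simple_subset hα)
  have h1 := S.neg_pos (S.refl_mem α hαΦ γ (S.pos_subset hγ)) hn
  obtain ⟨c, hc, hcs⟩ := S.simple_gen γ hγ
  obtain ⟨d, hd, hds⟩ := S.simple_gen _ h1
  rw [reflV_apply] at hds
  have key := coef_zero S (fun x => c x + d x - if x = α then ⟪γ, coroot α⟫ else 0) (by
    simp only [sub_smul, add_smul, Finset.sum_sub_distrib, Finset.sum_add_distrib, ite_smul,
      zero_smul]
    rw [← hcs, ← hds, Finset.sum_ite_eq' S.Δ α, if_pos hα]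
    abel)
  have h2 : γ = c α • α := by
    conv_lhs => rw [hcs]
    refine Finset.sum_eq_single_of_mem α hα fun x hx hxa => ?_
    have := key x hx
    simp only [hxa, if_false, sub_zero] at this
    have : c x = 0 := by linarith [hc x hx, hd x hx]
    rw [this, zero_smul]
  rcases S.reduced α hαΦ (c α) (h2 ▸ S.pos_subset hγ) with h3 | h3
  · rw [h3, one_smul] at h2; exact hne h2
  · linarith [hc α hα]

lemma pos_ind (S : RootSys V) {I : Finset V} (hI : I ⊆ S.Δ) (P : V → Prop)
    (h0 : ∀ α ∈ I, P α)
    (h1 : ∀ α ∈ I, ∀ γ ∈ PhiI S I, γ ∈ S.pos → P γ → P (reflV α γ)) :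
    ∀ γ ∈ PhiI S I, γ ∈ S.pos → P γ := by
  by_contra hcon
  push Not at hcon
  obtain ⟨γ₀, ha, hb, hc⟩ := hcon
  obtain ⟨ξ, hξ⟩ := exists_xi S
  obtain ⟨γ, hγ, hmin⟩ := Finset.exists_min_image
    (S.pos.filter (fun γ => γ ∈ PhiI S I ∧ ¬ P γ)) (fun γ => ⟪ξ, γ⟫)
    ⟨γ₀, Finset.mem_filter.mpr ⟨hb, ha, hc⟩⟩
  obtain ⟨hγp, hγI, hγP⟩ := Finset.mem_filter.mp hγ
  obtain ⟨c, hc, hcs⟩ := coefI S hI hγI hγp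
  have hne : γ ≠ 0 := S.ne_zero γ hγI.1
  have hpos : 0 < ∑ α ∈ I, c α * ⟪α, γ⟫ := by
    have : ⟪∑ α ∈ I, c α • α, γ⟫ = ∑ α ∈ I, c α * ⟪α, γ⟫ := by
      rw [sum_inner]; simp [real_inner_smul_left]
    rw [← this, ← hcs]
    exact real_inner_self_pos.mpr hne
  obtain ⟨α, hα, hαp⟩ := Finset.exists_lt_of_sum_lt (s := I) (f := fun _ => (0 : ℝ))
    (g := fun α => c α * ⟪α, γ⟫) (by simpa using hpos)
  have hip : 0 < ⟪α, γ⟫ := pos_of_mul_pos_right hαp (hc α hα)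
  have hneα : γ ≠ α := fun h => hγP (h ▸ h0 α hα)
  have hαI := mem_PhiI S hI hα
  have hr := simple_perm S (hI hα) hγp hneα
  have hrI := PhiI_refl S hαI hγI
  have hP : P (reflV α γ) := by
    by_contra hP
    have := hmin _ (Finset.mem_filter.mpr ⟨hr, hrI, hP⟩)
    simp only [reflV_apply, inner_sub_right, real_inner_smul_right, hξ α (hI hα)] at this
    have h5 : 0 < ⟪γ, coroot α⟫ := by
      rw [coroot, real_inner_smul_right, real_inner_comm α γ]
      have := real_inner_self_pos.mpr (S.ne_zero α hαI.1)
      exact mul_pos (div_pos two_pos this) hip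
    linarith
  have := h1 α hα _ hrI hr hP
  rw [reflV_invol] at this
  exact hγP this

lemma exists_list (S : RootSys V) {I : Finset V} (hI : I ⊆ S.Δ) {w : V ≃ₗ[ℝ] V}
    (hw : w ∈ weyl (PhiI S I)) :
    ∃ L : List V, (∀ α ∈ L, α ∈ I) ∧ (L.map reflV).prod = w := by
  have hsub : weyl (PhiI S I) ≤ weyl (I : Set V) := by
    have hpos : ∀ γ ∈ PhiI S I, γ ∈ S.pos → reflV γ ∈ weyl (I : Set V) := by
      refine pos_ind S hI _ (fun α hα => Subgroup.subset_closure ⟨α, hα, rfl⟩) ?_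
      intro α hα γ hγ hγp ih
      have hs : reflV α ∈ weyl (I : Set V) := Subgroup.subset_closure ⟨α, hα, rfl⟩
      have hg : Good S (reflV α) := Good.refl (mem_PhiI S hI hα).1
      have : reflV (reflV α γ) = reflV α * reflV γ * (reflV α)⁻¹ :=
        eq_mul_inv_of_mul_eq (hg.conj γ)
      rw [this]
      exact mul_mem (mul_mem hs ih) (inv_mem hs)
    refine (Subgroup.closure_le _).mpr ?_
    rintro _ ⟨γ, hγ, rfl⟩
    by_cases h : γ ∈ S.pos
    · exact hpos γ hγ h
    · rw [← reflV_neg]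
      exact hpos _ (PhiI_neg S hγ) (S.neg_pos hγ.1 h)
  have hw' := hsub hw
  induction hw' using Subgroup.closure_induction_left with
  | one => exact ⟨[], by simp, by simp⟩
  | mul_left x hx y _ ih =>
    obtain ⟨α, hα, rfl⟩ := hx
    have hm := refl_mem_weyl S (mem_PhiI S hI hα)
    obtain ⟨L, hL, rfl⟩ := ih ((Subgroup.mul_mem_cancel_left _ hm).mp hw)
    exact ⟨α :: L, by simpa using ⟨hα, hL⟩, by simp⟩
  | inv_mul_cancel x hx y _ ih =>
    obtain ⟨α, hα, rfl⟩ := hx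
    have hm := refl_mem_weyl S (mem_PhiI S hI hα)
    rw [reflV_inv] at hw ⊢
    obtain ⟨L, hL, rfl⟩ := ih ((Subgroup.mul_mem_cancel_left _ hm).mp hw)
    exact ⟨α :: L, by simpa using ⟨hα, hL⟩, by simp⟩

lemma list_good (S : RootSys V) {I : Finset V} (hI : I ⊆ S.Δ) (L : List V)
    (hL : ∀ α ∈ L, α ∈ I) : Good S (L.map reflV).prod := by
  refine weyl_good S (I := I) (Subgroup.list_prod_mem _ ?_)
  intro x hx
  obtain ⟨α, hα, rfl⟩ := List.mem_map.mp hx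
  exact refl_mem_weyl S (mem_PhiI S hI (hL α hα))

lemma exchange (S : RootSys V) {I : Finset V} (hI : I ⊆ S.Δ) {α : V} (hα : α ∈ I) (L : List V)
    (hL : ∀ α ∈ L, α ∈ I) (hn : (L.map reflV).prod α ∉ S.pos) :
    ∃ L' : List V, (∀ α ∈ L', α ∈ I) ∧ L'.length < L.length ∧
      (L'.map reflV).prod = (L.map reflV).prod * reflV α := by
  induction L with
  | nil => exact absurd (S.simple_subset (hI hα)) (by simpa using hn)
  | cons a T ih =>
    have ha : a ∈ I := hL a (by simp)
    have hT : ∀ α ∈ T, α ∈ I := fun x hx => hL x (by simp [hx])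
    by_cases h : (T.map reflV).prod α ∈ S.pos
    · have heq : (T.map reflV).prod α = a := by
        by_contra hne
        refine hn ?_
        simpa using simple_perm S (hI ha) h hne
      refine ⟨T, hT, by simp, ?_⟩
      have := (list_good S hI T hT).conj α
      rw [heq] at this
      rw [List.map_cons, List.prod_cons, this, mul_assoc, reflV_mul_self, mul_one]
    · obtain ⟨L', h1, h2, h3⟩ := ih hT h
      refine ⟨a :: L', by simpa using ⟨ha, h1⟩, by simpa using h2, ?_⟩
      simp [h3, mul_assoc]

lemma list_nontriv (S : RootSys V) {I : Finset V} (hI : I ⊆ S.Δ) (n : ℕ) :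
    ∀ L : List V, L.length = n → (∀ α ∈ L, α ∈ I) → (L.map reflV).prod ≠ 1 →
      ∃ α ∈ I, (L.map reflV).prod α ∉ S.pos := by
  induction n using Nat.strong_induction_on with
  | _ n ih =>
    intro L hlen hL hne
    rcases List.eq_nil_or_concat L with rfl | ⟨T, α, rfl⟩
    · simp at hne
    · rw [List.concat_eq_append] at *
      have hα : α ∈ I := hL α (by simp)
      have hT : ∀ α ∈ T, α ∈ I := fun x hx => hL x (by simp [hx])
      have hprod : ((T ++ [α]).map reflV).prod = (T.map reflV).prod * reflV α := by simp
      by_cases h : (T.map reflV).prod α ∈ S.pos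
      · refine ⟨α, hα, ?_⟩
        rw [hprod, LinearEquiv.mul_apply, reflV_self, map_neg]
        exact S.not_both _ h
      · obtain ⟨L', h1, h2, h3⟩ := exchange S hI hα T hT h
        rw [hprod, ← h3] at hne ⊢
        refine ih L'.length ?_ L' rfl h1 hne
        simp at hlen; omega

lemma weyl_nontriv (S : RootSys V) {I : Finset V} (hI : I ⊆ S.Δ) {w : V ≃ₗ[ℝ] V}
    (hw : w ∈ weyl (PhiI S I)) (hne : w ≠ 1) : ∃ α ∈ I, w α ∉ S.pos := by
  obtain ⟨L, hL, rfl⟩ := exists_list S hI hw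
  exact list_nontriv S hI _ L rfl hL hne

lemma coroot_smul {α : V} (h : α ≠ 0) : α = (⟪α, α⟫ / 2) • coroot α := by
  have h' : ⟪α, α⟫ ≠ 0 := fun h0 => h (inner_self_eq_zero.mp h0)
  rw [coroot, smul_smul, div_mul_div_cancel₀ (by norm_num), div_self h', one_smul]

lemma dom_pos (S : RootSys V) {I : Finset V} (hI : I ⊆ S.Δ) {m : HStar V}
    (hm : m ∈ LambdaP (I : Set V)) {γ : V} (hγ : γ ∈ PhiI S I) (hp : γ ∈ S.pos) :
    0 < (m γ).re := by
  obtain ⟨c, hc, hcs⟩ := coefI S hI hγ hp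
  have hα : ∀ α ∈ I, 0 < (m α).re := by
    intro α hα
    obtain ⟨n, hn, hmn⟩ := hm α hα
    have h0 := S.ne_zero α (mem_PhiI S hI hα).1
    rw [coroot_smul h0, map_smul, hmn]
    have := real_inner_self_pos.mpr h0
    have hn' : (0 : ℝ) < n := by exact_mod_cast hn
    simp only [Complex.real_smul, Complex.re_ofReal_mul, Complex.intCast_re]
    positivity
  have hsum : (m γ).re = ∑ α ∈ I, c α * (m α).re := by
    conv_lhs => rw [hcs]
    simp [Complex.re_sum]
  rw [hsum]
  refine Finset.sum_pos' (fun α h => mul_nonneg (hc α h) (hα α h).le) ?_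
  by_contra hcon
  push Not at hcon
  refine S.ne_zero γ hγ.1 ?_
  rw [hcs]
  refine Finset.sum_eq_zero fun α h => ?_
  have h1 := hcon α h
  have h2 : c α = 0 := le_antisymm (by
    by_contra h3; push Not at h3; exact absurd h1 (not_le.mpr (mul_pos h3 (hα α h)))) (hc α h)
  rw [h2, zero_smul]

lemma dom_regular (S : RootSys V) {I : Finset V} (hI : I ⊆ S.Δ) {m : HStar V}
    (hm : m ∈ LambdaP (I : Set V)) : IsRegularOn (PhiI S I) m := by
  intro γ hγ h
  by_cases hp : γ ∈ S.pos
  · have := dom_pos S hI hm hγ hp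
    simp [h] at this
  · have := dom_pos S hI hm (PhiI_neg S hγ) (S.neg_pos hγ.1 hp)
    simp [h] at this

lemma dom_unique (S : RootSys V) {I : Finset V} (hI : I ⊆ S.Δ) {m m' : HStar V}
    (hm : m ∈ LambdaP (I : Set V)) (hm' : m' ∈ LambdaP (I : Set V)) {w : V ≃ₗ[ℝ] V}
    (hw : w ∈ weyl (PhiI S I)) (h : wAct w m = m') : w = 1 := by
  by_contra hne
  obtain ⟨α, hα, hn⟩ := weyl_nontriv S hI hw hne
  have hαI := mem_PhiI S hI hα
  have h1 := dom_pos S hI hm hαI (S.simple_subset (hI hα))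
  have hwα := weyl_PhiI S hw α hαI
  have h2 := dom_pos S hI hm' (PhiI_neg S hwα) (S.neg_pos hwα.1 hn)
  rw [← h, map_neg, wAct_inv_apply] at h2
  simp at h2
  linarith

lemma dom_int (S : RootSys V) {I : Finset V} (hI : I ⊆ S.Δ) {m : HStar V}
    (hm : m ∈ LambdaP (I : Set V)) : ∀ γ ∈ PhiI S I, IsInt (m (coroot γ)) := by
  have hpos : ∀ γ ∈ PhiI S I, γ ∈ S.pos → IsInt (m (coroot γ)) := by
    refine pos_ind S hI _ (fun α hα => ?_) ?_
    · obtain ⟨n, -, hn⟩ := hm α hα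
      exact ⟨n, hn⟩
    · intro α hα γ hγ hγp ⟨n, hn⟩
      obtain ⟨k, hk⟩ := hm α hα
      have hαΦ := (mem_PhiI S hI hα).1
      obtain ⟨j, hj⟩ := S.crystallographic γ hγ.1 α hαΦ
      have hg : Good S (reflV α) := Good.refl hαΦ
      have : coroot (reflV α γ) = coroot γ - (j : ℝ) • coroot α := by
        rw [hg.coroot, reflV_apply, ← hj, coroot.eq_1 α, real_inner_smul_right, smul_smul,
          real_inner_comm α (coroot γ), mul_comm]
      refine ⟨n - j * k, ?_⟩
      rw [this, map_sub, map_smul, hn, hk.2]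
      simp
  intro γ hγ
  by_cases h : γ ∈ S.pos
  · exact hpos γ hγ h
  · obtain ⟨n, hn⟩ := hpos _ (PhiI_neg S hγ) (S.neg_pos hγ.1 h)
    refine ⟨-n, ?_⟩
    rw [coroot_neg, map_neg] at hn
    rw [Int.cast_neg, ← hn, neg_neg]

lemma exists_dom (S : RootSys V) {I : Finset V} (hI : I ⊆ S.Δ) {l : HStar V}
    (hlint0 : ∀ γ ∈ PhiI S I, IsInt (l (coroot γ))) (hreg : IsRegularOn (PhiI S I) l) :
    ∃ w ∈ weyl (PhiI S I), wAct w l ∈ LambdaP (I : Set V) := by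
  obtain ⟨ξ, hξ⟩ := exists_xi S
  obtain ⟨w, hw, hmax⟩ := Set.exists_max_image (weyl (PhiI S I) : Set (V ≃ₗ[ℝ] V))
    (fun w => (wAct w l ξ).re) (weyl_finite S I) ⟨1, one_mem _⟩
  refine ⟨w, hw, fun α hα => ?_⟩
  have hαI := mem_PhiI S hI hα
  have hwi : w⁻¹ ∈ weyl (PhiI S I) := inv_mem hw
  have hα0 := S.ne_zero α hαI.1
  have hγ := weyl_PhiI S hwi α hαI
  obtain ⟨n, hn⟩ := hlint0 _ hγ
  have hn' : wAct w l (coroot α) = n := by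
    rw [wAct_apply, ← (weyl_good S hwi).coroot, hn]
  have hwα : wAct w l α = ((⟪α, α⟫ / 2 : ℝ) : ℂ) * n := by
    conv_lhs => rw [coroot_smul hα0]
    rw [map_smul, hn', Complex.real_smul]
  have hip := real_inner_self_pos.mpr hα0
  refine ⟨n, ?_, hn'⟩
  by_contra hneg
  have hn0 : n ≠ 0 := by
    rintro rfl
    refine hreg _ hγ ?_
    rw [← wAct_apply, hwα]; simp
  have hnl : (n : ℝ) < 0 := by
    have : n < 0 := by omega
    exact_mod_cast this
  have h1 := hmax (reflV α * w) (mul_mem (refl_mem_weyl S hαI) hw)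
  have h2 : ⟪ξ, coroot α⟫ = 2 / ⟪α, α⟫ := by
    rw [coroot, real_inner_smul_right, hξ α (hI hα), mul_one]
  simp only [wAct_mul] at h1
  rw [wAct_refl_apply, hwα, h2] at h1
  have h3 : (((2 / ⟪α, α⟫ : ℝ)) • (((⟪α, α⟫ / 2 : ℝ) : ℂ) * (n : ℂ))).re = n := by
    simp only [Complex.real_smul, Complex.re_ofReal_mul, Complex.intCast_re]
    field_simp
  rw [Complex.sub_re, h3] at h1
  linarith

lemma sRefl_int (S : RootSys V) {I : Finset V} (hI : I ⊆ S.Δ) {l : HStar V}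
    (hl : l ∈ LambdaP (I : Set V)) {β : V} (hβ : β ∈ PsiP S (PhiI S I) (S.Φ : Set V) l) :
    ∀ γ ∈ PhiI S I, IsInt (sRefl β l (coroot γ)) := by
  intro γ hγ
  obtain ⟨⟨hβΦ, -⟩, -, k, -, hk⟩ := hβ
  obtain ⟨n, hn⟩ := dom_int S hI hl γ hγ
  obtain ⟨j, hj⟩ := S.crystallographic γ hγ.1 β hβΦ
  refine ⟨n - k * j, ?_⟩
  rw [sRefl_apply, hn, hk, hj]
  simp

lemma reg_of_conj (S : RootSys V) {I : Finset V} {l m : HStar V} {w : V ≃ₗ[ℝ] V}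
    (hw : w ∈ weyl (PhiI S I)) (hm : IsRegularOn (PhiI S I) m) (h : m = wAct w l) :
    IsRegularOn (PhiI S I) l := by
  intro α hα h0
  refine hm (w α) (weyl_PhiI S hw α hα) ?_
  rw [h, wAct_inv_apply, h0]

lemma sgnW_of (S : RootSys V) {I : Finset V} (hI : I ⊆ S.Δ) {l m : HStar V} {w : V ≃ₗ[ℝ] V}
    (hm : m ∈ LambdaP (I : Set V)) (hw : w ∈ weyl (PhiI S I)) (h : m = wAct w l) :
    sgnW S (PhiI S I) l m = (-1) ^ len S w := by
  have hreg := dom_regular S hI hm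
  have hh : IsRegularOn (PhiI S I) l ∧ IsRegularOn (PhiI S I) m ∧
      ∃ w, w ∈ weyl (PhiI S I) ∧ m = wAct w l :=
    ⟨reg_of_conj S hw hreg h, hreg, w, hw, h⟩
  rw [sgnW, dif_pos hh]
  obtain ⟨h1, h2⟩ := hh.2.2.choose_spec
  generalize hh.2.2.choose = w' at h1 h2 ⊢
  have h3 : w * w'⁻¹ = 1 := by
    refine dom_unique S hI hm hm (mul_mem hw (inv_mem h1)) ?_
    conv_lhs => rw [h2]
    rw [← wAct_mul, inv_mul_cancel_right, ← h]
  rw [mul_inv_eq_one.mp h3]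

/-- Definition/Lemma 4.1 and Lemma 4.5: for `λ ∈ Λ_I⁺`,
`Σ_{β ∈ Ψ_λ⁺} θ(s_β λ) = Σ_{β ∈ Ψ_λ⁺⁺} θ(s_β λ) = Σ_{μ ∈ Λ_I⁺} c(λ,μ) θ(μ)`,
where the Jantzen coefficient `c(λ,μ) = Σ_{β ∈ Ψ_λ⁺⁺} sgn(s_β λ, μ)` is nonzero for only
finitely many `μ`; moreover `c(λ,μ) = Σ_{β ∈ Ψ⁺_{λ,μ}} (-1)^{ℓ(w_β)}` where
`Ψ⁺_{λ,μ} = {β ∈ Ψ_λ⁺ : μ = w_β s_β λ for some w_β ∈ W_I}`, the element `w_β` being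
unique for each such `β`. -/
theorem statement_4 {V : Type*} [NormedAddCommGroup V] [InnerProductSpace ℝ V]
    [FiniteDimensional ℝ V]
    (S : RootSys V) (I : Finset V) (hI : I ⊆ S.Δ)
    (lam : HStar V) (hlam : lam ∈ LambdaP (I : Set V)) :
    (∑ᶠ β ∈ PsiP S (PhiI S I) (S.Φ : Set V) lam, theta S I (sRefl β lam)) =
      (∑ᶠ β ∈ PsiPP S (PhiI S I) (S.Φ : Set V) lam, theta S I (sRefl β lam)) ∧
    (∑ᶠ β ∈ PsiP S (PhiI S I) (S.Φ : Set V) lam, theta S I (sRefl β lam)) =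
      (∑ᶠ mu ∈ LambdaP (I : Set V),
        jc S (PhiI S I) (S.Φ : Set V) lam mu • theta S I mu) ∧
    {mu ∈ LambdaP (I : Set V) | jc S (PhiI S I) (S.Φ : Set V) lam mu ≠ 0}.Finite ∧
    (∀ mu ∈ LambdaP (I : Set V),
      jc S (PhiI S I) (S.Φ : Set V) lam mu =
        ∑ᶠ β ∈ PsiP S (PhiI S I) (S.Φ : Set V) lam,
          (if h : ∃ w, w ∈ weyl (PhiI S I) ∧ mu = wAct w (sRefl β lam)
           then (-1 : ℤ) ^ len S h.choose else 0)) ∧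
    (∀ mu ∈ LambdaP (I : Set V), ∀ β ∈ PsiP S (PhiI S I) (S.Φ : Set V) lam,
      ∀ w w' : V ≃ₗ[ℝ] V, w ∈ weyl (PhiI S I) → w' ∈ weyl (PhiI S I) →
        mu = wAct w (sRefl β lam) → mu = wAct w' (sRefl β lam) → w = w') := by
  have hAfin : (PsiP S (PhiI S I) (S.Φ : Set V) lam).Finite :=
    S.pos.finite_toSet.subset fun β hβ => hβ.1.2
  have hBA : PsiPP S (PhiI S I) (S.Φ : Set V) lam ⊆ PsiP S (PhiI S I) (S.Φ : Set V) lam :=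
    fun β hβ => hβ.1
  have hBfin := hAfin.subset hBA
  have hdom : ∀ β, ∃ m : HStar V, β ∈ PsiPP S (PhiI S I) (S.Φ : Set V) lam →
      m ∈ LambdaP (I : Set V) ∧ ∃ w ∈ weyl (PhiI S I), m = wAct w (sRefl β lam) := by
    intro β
    by_cases hβ : β ∈ PsiPP S (PhiI S I) (S.Φ : Set V) lam
    · obtain ⟨w, hw, h⟩ := exists_dom S hI (sRefl_int S hI hlam hβ.1) hβ.2
      exact ⟨_, fun _ => ⟨h, w, hw, rfl⟩⟩
    · exact ⟨0, fun h => absurd h hβ⟩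
  choose mf hmf using hdom
  have hsgn : ∀ β ∈ PsiPP S (PhiI S I) (S.Φ : Set V) lam, ∀ m ∈ LambdaP (I : Set V),
      sgnW S (PhiI S I) (sRefl β lam) m ≠ 0 → m = mf β := by
    intro β hβ m hm hne
    obtain ⟨h1, w, hw, h2⟩ := hmf β hβ
    rw [sgnW] at hne
    split_ifs at hne with hh
    · obtain ⟨w', hw', h'⟩ := hh.2.2
      have h3 : wAct (w' * w⁻¹) (mf β) = m := by
        rw [h2, ← wAct_mul, inv_mul_cancel_right, ← h']
      have h4 := dom_unique S hI h1 hm (mul_mem hw' (inv_mem hw)) h3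
      rw [h4, wAct_one] at h3
      exact h3.symm
    · exact absurd rfl hne
  have hth : ∀ β ∈ PsiPP S (PhiI S I) (S.Φ : Set V) lam,
      theta S I (sRefl β lam) =
        sgnW S (PhiI S I) (sRefl β lam) (mf β) • theta S I (mf β) := by
    intro β hβ
    obtain ⟨h1, w, hw, h2⟩ := hmf β hβ
    rw [sgnW_of S hI h1 hw h2]
    rw [h2, theta_act S I hw, smul_smul, ← pow_add, Even.neg_one_pow ⟨_, rfl⟩, one_smul]
  have hjc : ∀ m, jc S (PhiI S I) (S.Φ : Set V) lam m =
      ∑ β ∈ hBfin.toFinset, sgnW S (PhiI S I) (sRefl β lam) m := fun m =>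
    finsum_mem_eq_finite_toFinset_sum _ hBfin
  have hM : ∀ m ∈ LambdaP (I : Set V), jc S (PhiI S I) (S.Φ : Set V) lam m ≠ 0 →
      m ∈ hBfin.toFinset.image mf := by
    intro m hm hne
    rw [hjc] at hne
    obtain ⟨β, hβ, hne'⟩ := Finset.exists_ne_zero_of_sum_ne_zero hne
    exact Finset.mem_image.mpr ⟨β, hβ, (hsgn β (hBfin.mem_toFinset.mp hβ) m hm hne').symm⟩
  have hMsub : ∀ m ∈ hBfin.toFinset.image mf, m ∈ LambdaP (I : Set V) := by
    intro m hm
    obtain ⟨β, hβ, rfl⟩ := Finset.mem_image.mp hm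
    exact (hmf β (hBfin.mem_toFinset.mp hβ)).1
  have part1 : (∑ᶠ β ∈ PsiP S (PhiI S I) (S.Φ : Set V) lam, theta S I (sRefl β lam)) =
      (∑ᶠ β ∈ PsiPP S (PhiI S I) (S.Φ : Set V) lam, theta S I (sRefl β lam)) := by
    refine finsum_mem_inter_support_eq' _ _ _ fun β hβ => ⟨fun h => ⟨h, fun α hα h0 => ?_⟩,
      fun h => hBA h⟩
    exact hβ (theta_sing S I hα _ h0)
  refine ⟨part1, ?_, ?_, ?_, ?_⟩
  · rw [part1, finsum_mem_eq_finite_toFinset_sum _ hBfin,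
      finsum_mem_eq_sum_of_subset (t := hBfin.toFinset.image mf)]
    · simp only [hjc, Finset.sum_smul]
      rw [Finset.sum_comm]
      refine Finset.sum_congr rfl fun β hβ => ?_
      have hβ' := hBfin.mem_toFinset.mp hβ
      rw [hth β hβ']
      symm
      refine Finset.sum_eq_single_of_mem (mf β) (Finset.mem_image_of_mem _ hβ) ?_
      intro m hm hne
      have : sgnW S (PhiI S I) (sRefl β lam) m = 0 := by
        by_contra h
        exact hne (hsgn β hβ' m (hMsub m hm) h)
      rw [this, zero_smul]
    · rintro m ⟨hm, hs⟩
      refine hM m hm fun h => hs ?_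
      simp only [h, zero_smul]
    · exact hMsub
  · exact (hBfin.toFinset.image mf).finite_toSet.subset fun m hm => hM m hm.1 hm.2
  · intro m hm
    have hreg := dom_regular S hI hm
    symm
    trans ∑ᶠ β ∈ PsiPP S (PhiI S I) (S.Φ : Set V) lam,
          (if h : ∃ w, w ∈ weyl (PhiI S I) ∧ m = wAct w (sRefl β lam)
           then (-1 : ℤ) ^ len S h.choose else 0)
    · refine finsum_mem_inter_support_eq' _ _ _ fun β hβ => ⟨fun h => ⟨h, ?_⟩, fun h => hBA h⟩
      rw [Function.mem_support] at hβ
      split_ifs at hβ with hh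
      · obtain ⟨w, hw, h'⟩ := hh
        exact reg_of_conj S hw hreg h'
      · exact absurd rfl hβ
    · refine finsum_mem_congr rfl fun β hβ => ?_
      split_ifs with hh
      · exact (sgnW_of S hI hm hh.choose_spec.1 hh.choose_spec.2).symm
      · rw [sgnW, dif_neg]
        exact fun h => hh h.2.2
  · intro m hm β hβ w w' hw hw' h h'
    have h3 : wAct (w * w'⁻¹) m = m := by
      conv_lhs => rw [h']
      rw [← wAct_mul, inv_mul_cancel_right, ← h]
    exact mul_inv_eq_one.mp (dom_unique S hI hm hm (mul_mem hw (inv_mem hw')) h3)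

end JantzenGVM
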